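/- For all integers n ≥ 0, m ≥ 1 and l ≥ 0, the partial sum of (2l+1)-st powers of equally spaced balancing numbers is given explicitly, as an equality of rational numbers, by ∑_{k=0}^{n} B_{km}^{2l+1} = (1/2^{5l}) · ∑_{s=0}^{l} (-1)^s · C(2l+1, s) · ( B_{(2(l-s)+1)m(n+1)} − B_{(2(l-s)+1)mn} − B_{(2(l-s)+1)m} ) / ( −2 + 6·B_{(2(l-s)+1)m} − 2·B_{(2(l-s)+1)m − 1} ), where each denominator −2 + 6·B_{(2(l-s)+1)m} − 2·B_{(2(l-s)+1)m − 1} is nonzero. -/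

import Mathlib

/-- The balancing numbers: B₀ = 0, B₁ = 1, Bₙ = 6·Bₙ₋₁ − Bₙ₋₂. -/
def balancing : ℕ → ℤ
  | 0 => 0
  | 1 => 1
  | n + 2 => 6 * balancing (n + 1) - balancing n

/-!
If `x + y = 6` and `x * y = 1`, then `(x - y) * B n = x ^ n - y ^ n`. Expanding
`(x ^ n - y ^ n) ^ (2 * l + 1)` binomially and pairing the terms `s` and `2 * l + 1 - s` linearizes
`B n ^ (2 * l + 1)`, the power of two coming from `(x - y) ^ 2 = 32`. For fixed `m`, the sequence
`n ↦ B (m * n)` has characteristic roots `x ^ m` and `y ^ m`, hence satisfies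
`u (n + 2) = c * u (n + 1) - u n` with `c = x ^ m + y ^ m = 6 * B m - 2 * B (m - 1)`; summing this
recurrence telescopes, with the factor `c - 2` that appears in the denominators.
-/

section CommRing

variable {R : Type*} [CommRing R]

theorem sub_pow_two_mul_add_one_eq_sum (x y : R) (l : ℕ) :
    (x - y) ^ (2 * l + 1) = ∑ s ∈ Finset.range (l + 1),
      (-1) ^ s * ((2 * l + 1).choose s : R) *
        ((x * y) ^ s * (x ^ (2 * (l - s) + 1) - y ^ (2 * (l - s) + 1))) := by
  -- The upper half of the binomial expansion is reversed, so that `2 * l + 1 - s` faces `s`.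
  rw [sub_eq_add_neg, add_pow, show 2 * l + 1 + 1 = (l + 1) + (l + 1) by ring,
    Finset.sum_range_add,
    ← Finset.sum_range_reflect (fun j => x ^ (l + 1 + j) * _ * _) (l + 1),
    ← Finset.sum_add_distrib]
  refine Finset.sum_congr rfl fun s hs => ?_
  obtain ⟨t, rfl⟩ := Nat.exists_eq_add_of_le (Finset.mem_range_succ_iff.mp hs)
  have reflected : s + t + 1 + (s + t + 1 - 1 - s) = s + (2 * t + 1) := by omega
  have complement : 2 * (s + t) + 1 - s = s + (2 * t + 1) := by omega
  have complement_complement : 2 * (s + t) + 1 - (s + (2 * t + 1)) = s := by omega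
  have choose_complement :
      (2 * (s + t) + 1).choose (s + (2 * t + 1)) = (2 * (s + t) + 1).choose s :=
    Nat.choose_symm_of_eq_add (by ring)
  have neg_one_pow : (-1 : R) ^ (s + (2 * t + 1)) = -(-1) ^ s := by
    rw [pow_add, (odd_two_mul_add_one t).neg_one_pow, mul_neg_one]
  rw [reflected, complement, complement_complement, choose_complement, Nat.add_sub_cancel_left,
    neg_pow y s, neg_pow y (s + (2 * t + 1)), neg_one_pow]
  ring

theorem sub_two_mul_sum_range_of_recurrence {u : ℕ → R} {c : R}
    (hu : ∀ n, u (n + 2) = c * u (n + 1) - u n) (n : ℕ) :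
    (c - 2) * ∑ k ∈ Finset.range (n + 1), u k = u (n + 1) - u n - u 1 + (c - 1) * u 0 := by
  induction n with
  | zero => rw [Finset.sum_range_one]; ring
  | succ n ih =>
    rw [Finset.sum_range_succ, mul_add, ih, hu n]
    ring

variable {x y : R}

theorem sub_sq_eq_thirty_two (hadd : x + y = 6) (hmul : x * y = 1) : (x - y) ^ 2 = 32 := by
  linear_combination (x + y + 6) * hadd - 4 * hmul

theorem cast_balancing_add_two (n : ℕ) :
    (balancing (n + 2) : R) = 6 * balancing (n + 1) - balancing n := by
  rw [balancing]
  push_cast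
  rfl

theorem sub_mul_balancing (hadd : x + y = 6) (hmul : x * y = 1) (n : ℕ) :
    (x - y) * (balancing n : R) = x ^ n - y ^ n := by
  induction n using Nat.twoStepInduction with
  | zero => simp [balancing]
  | one => simp [balancing]
  | more n ih ih_succ =>
    rw [cast_balancing_add_two]
    linear_combination 6 * ih_succ - ih - (x ^ (n + 1) - y ^ (n + 1)) * hadd
      + (x ^ n - y ^ n) * hmul

theorem pow_succ_add_pow_succ_eq_balancing (hadd : x + y = 6) (hmul : x * y = 1) (n : ℕ) :
    x ^ (n + 1) + y ^ (n + 1) = 6 * (balancing (n + 1) : R) - 2 * (balancing n : R) := by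
  induction n using Nat.twoStepInduction with
  | zero => simpa [balancing] using hadd
  | one =>
    simp only [balancing]
    push_cast
    linear_combination (x + y + 6) * hadd - 2 * hmul
  | more n ih ih_succ =>
    linear_combination 6 * ih_succ - ih + (x ^ (n + 2) + y ^ (n + 2)) * hadd
      - (x ^ (n + 1) + y ^ (n + 1)) * hmul
      - 6 * cast_balancing_add_two (R := R) (n + 1) + 2 * cast_balancing_add_two (R := R) n

end CommRing

theorem exists_add_eq_six_mul_eq_one : ∃ x y : ℝ, x + y = 6 ∧ x * y = 1 ∧ x ≠ y := by
  have sqrt_two_sq : √2 ^ 2 = (2 : ℝ) := Real.sq_sqrt zero_le_two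
  have sqrt_two_pos : 0 < √2 := Real.sqrt_pos.mpr two_pos
  exact ⟨3 + 2 * √2, 3 - 2 * √2, by ring, by linear_combination -4 * sqrt_two_sq, by linarith⟩

theorem two_pow_mul_balancing_pow_two_mul_add_one (n l : ℕ) :
    2 ^ (5 * l) * balancing n ^ (2 * l + 1) = ∑ s ∈ Finset.range (l + 1),
      (-1) ^ s * ((2 * l + 1).choose s : ℤ) * balancing ((2 * (l - s) + 1) * n) := by
  obtain ⟨x, y, hadd, hmul, hne⟩ := exists_add_eq_six_mul_eq_one
  have sub_pow : (x - y) ^ (2 * l + 1) = (x - y) * 2 ^ (5 * l) := by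
    rw [pow_succ', pow_mul, sub_sq_eq_thirty_two hadd hmul, pow_mul]
    norm_num
  apply Int.cast_injective (α := ℝ)
  apply mul_left_cancel₀ (sub_ne_zero.mpr hne)
  push_cast
  calc (x - y) * (2 ^ (5 * l) * (balancing n : ℝ) ^ (2 * l + 1))
      = (x ^ n - y ^ n) ^ (2 * l + 1) := by
        rw [← mul_assoc, ← sub_pow, ← mul_pow, sub_mul_balancing hadd hmul]
    _ = ∑ s ∈ Finset.range (l + 1), (-1) ^ s * ((2 * l + 1).choose s : ℝ) *
          ((x - y) * (balancing ((2 * (l - s) + 1) * n) : ℝ)) := by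
        simp only [sub_pow_two_mul_add_one_eq_sum, ← mul_pow, hmul, one_pow, one_mul,
          sub_mul_balancing hadd hmul, ← pow_mul, mul_comm n]
    _ = (x - y) * ∑ s ∈ Finset.range (l + 1), (-1) ^ s * ((2 * l + 1).choose s : ℝ) *
          (balancing ((2 * (l - s) + 1) * n) : ℝ) := by
        rw [Finset.mul_sum]
        exact Finset.sum_congr rfl fun s _ => mul_left_comm _ _ _

theorem balancing_mul_add_two (m n : ℕ) :
    balancing ((m + 1) * (n + 2)) =
      (6 * balancing (m + 1) - 2 * balancing m) * balancing ((m + 1) * (n + 1))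
        - balancing ((m + 1) * n) := by
  obtain ⟨x, y, hadd, hmul, hne⟩ := exists_add_eq_six_mul_eq_one
  have binet (k : ℕ) := sub_mul_balancing hadd hmul ((m + 1) * k)
  simp only [pow_mul] at binet
  have pow_mul_pow : x ^ (m + 1) * y ^ (m + 1) = 1 := by rw [← mul_pow, hmul, one_pow]
  apply Int.cast_injective (α := ℝ)
  apply mul_left_cancel₀ (sub_ne_zero.mpr hne)
  push_cast
  rw [← pow_succ_add_pow_succ_eq_balancing hadd hmul m]
  linear_combination binet (n + 2) - (x ^ (m + 1) + y ^ (m + 1)) * binet (n + 1) + binet n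
    - ((x ^ (m + 1)) ^ n - (y ^ (m + 1)) ^ n) * pow_mul_pow

theorem strictMono_balancing : StrictMono balancing := by
  have nonneg_and_lt (n : ℕ) : 0 ≤ balancing n ∧ balancing n < balancing (n + 1) := by
    induction n with
    | zero => decide
    | succ n ih =>
      rw [balancing]
      omega
  exact strictMono_nat_of_lt_succ fun n => (nonneg_and_lt n).2

theorem neg_two_add_balancing_pos {m : ℕ} (hm : 0 < m) :
    0 < -2 + 6 * balancing m - 2 * balancing (m - 1) := by
  have pred_lt : balancing (m - 1) < balancing m := strictMono_balancing (Nat.sub_one_lt_of_lt hm)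
  have pos : 0 < balancing m := strictMono_balancing hm
  linarith

theorem sum_range_balancing_mul {K : Type*} [Field K] [CharZero K] {m : ℕ} (hm : 0 < m) (n : ℕ) :
    ∑ k ∈ Finset.range (n + 1), (balancing (m * k) : K) =
      (balancing (m * (n + 1)) - balancing (m * n) - balancing m) /
        (-2 + 6 * balancing m - 2 * balancing (m - 1)) := by
  have denom_ne_zero : (-2 + 6 * balancing m - 2 * balancing (m - 1) : K) ≠ 0 :=
    mod_cast (neg_two_add_balancing_pos hm).ne'
  obtain ⟨m, rfl⟩ := Nat.exists_eq_add_one_of_ne_zero hm.ne'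
  have telescope := sub_two_mul_sum_range_of_recurrence
    (u := fun k => (balancing ((m + 1) * k) : K)) (c := 6 * balancing (m + 1) - 2 * balancing m)
    (fun k => mod_cast balancing_mul_add_two m k) n
  simp only [mul_zero, mul_one, balancing, Int.cast_zero, add_zero] at telescope
  rw [eq_div_iff denom_ne_zero, Nat.add_sub_cancel]
  linear_combination telescope

/-- Explicit formula for partial sums of odd powers of equally spaced balancing numbers,
as an equality of rational numbers; each denominator appearing is nonzero. -/
theorem balancing_sum_odd_powers (n m l : ℕ) (hm : 1 ≤ m) :
    (∀ s ≤ l,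
        (-2 + 6 * (balancing ((2 * (l - s) + 1) * m) : ℚ)
          - 2 * (balancing ((2 * (l - s) + 1) * m - 1) : ℚ)) ≠ 0) ∧
    ∑ k ∈ Finset.range (n + 1), ((balancing (k * m) : ℚ)) ^ (2 * l + 1) =
      1 / 2 ^ (5 * l) *
        ∑ s ∈ Finset.range (l + 1),
          (-1 : ℚ) ^ s * (Nat.choose (2 * l + 1) s : ℚ) *
            ((balancing ((2 * (l - s) + 1) * m * (n + 1)) : ℚ)
              - (balancing ((2 * (l - s) + 1) * m * n) : ℚ)
              - (balancing ((2 * (l - s) + 1) * m) : ℚ)) /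
          (-2 + 6 * (balancing ((2 * (l - s) + 1) * m) : ℚ)
            - 2 * (balancing ((2 * (l - s) + 1) * m - 1) : ℚ)) := by
  have index_pos (s : ℕ) : 0 < (2 * (l - s) + 1) * m := Nat.mul_pos (Nat.succ_pos _) hm
  have linearization (k : ℕ) : (balancing (k * m) : ℚ) ^ (2 * l + 1) =
      1 / 2 ^ (5 * l) * ∑ s ∈ Finset.range (l + 1),
        (-1) ^ s * ((2 * l + 1).choose s : ℚ) * balancing ((2 * (l - s) + 1) * m * k) := by
    rw [one_div, eq_inv_mul_iff_mul_eq₀ (by positivity)]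
    simp only [mul_assoc _ m k, mul_comm m k]
    exact_mod_cast two_pow_mul_balancing_pow_two_mul_add_one (k * m) l
  refine ⟨fun s _ => mod_cast (neg_two_add_balancing_pos (index_pos s)).ne', ?_⟩
  simp only [linearization]
  rw [← Finset.mul_sum, Finset.sum_comm]
  simp only [← Finset.mul_sum, sum_range_balancing_mul (index_pos _), mul_div_assoc]
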